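/- arXiv:2109.06002 — 4 statements merged into one kernel-verified Lean document; each statement's English description precedes it below -/
import Mathlib

section
/- A complete geodesic metric space (X,d) is locally compact if and only if it is regular, i.e. if and only if for every bounded nondecreasing chain of compact sets (K_α)_{α∈A} in X, the Painlevé–Kuratowski limit Lim_α K_α is compact. -/
/-!
For a nondecreasing net, the inner and outer limits both equal the closure of the union
(`pkLiminf_eq_closure`, `pkLimsup_eq_closure`). Hence regularity says that bounded increasing unions
of compact sets are relatively compact.

If `X` is locally compact, the Hopf–Rinow–Cohn-Vossen theorem (`isCompact_closedBall_of_geodesic`)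
makes all closed balls compact, so the closure of any bounded set is compact. For that theorem, let
`R` be the supremum of the radii whose closed ball about `x` is compact. A geodesic from `x` to a
point of the ball of radius `r + δ` passes within `δ` of that point inside the ball of radius `r`
(`exists_mem_closedBall_dist_le`). This gives compactness of the ball of radius `R` (complete and
totally bounded), and then, by thickening that compact ball, compactness of a strictly larger one.

Conversely, if `X` is regular, apply regularity to the finite sets of initial terms of a sequence in
a closed ball: the sequence lies in a compact set, so it has a convergent subsequence. Thus closed
balls are compact and `X` is locally compact.
-/

open Set

/-- A geodesic from `x` to `y`: an isometric parametrization of `[0, d(x,y)]`. -/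
def IsGeodesic {X : Type*} [MetricSpace X] (x y : X) (γ : ℝ → X) : Prop :=
  γ 0 = x ∧ γ (dist x y) = y ∧
    ∀ s ∈ Set.Icc (0 : ℝ) (dist x y), ∀ t ∈ Set.Icc (0 : ℝ) (dist x y),
      dist (γ s) (γ t) = |s - t|

/-- The union of all geodesic segments from `x` to `y` (in a uniquely geodesic
space this is the geodesic segment `[x,y]`). -/
def segs {X : Type*} [MetricSpace X] (x y : X) : Set X :=
  ⋃ γ ∈ {γ : ℝ → X | IsGeodesic x y γ}, γ '' Set.Icc (0 : ℝ) (dist x y)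

/-- A geodesic metric space: every two points are joined by a geodesic. -/
def GeodesicSpace (X : Type*) [MetricSpace X] : Prop :=
  ∀ x y : X, ∃ γ : ℝ → X, IsGeodesic x y γ

/-- A uniquely geodesic metric space. -/
def UniquelyGeodesic (X : Type*) [MetricSpace X] : Prop :=
  GeodesicSpace X ∧ ∀ (x y : X) (γ₁ γ₂ : ℝ → X), IsGeodesic x y γ₁ → IsGeodesic x y γ₂ →
    Set.EqOn γ₁ γ₂ (Set.Icc (0 : ℝ) (dist x y))

/-- A CAT(0) space: a geodesic space satisfying the quadratic comparison inequality. -/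
def CAT0 (X : Type*) [MetricSpace X] : Prop :=
  GeodesicSpace X ∧
    ∀ (x y z : X) (γ : ℝ → X), IsGeodesic x y γ → ∀ t ∈ Set.Icc (0 : ℝ) 1,
      dist (γ (t * dist x y)) z ^ 2 ≤
        (1 - t) * dist x z ^ 2 + t * dist y z ^ 2 - t * (1 - t) * dist x y ^ 2

/-- A flat CAT(0) space: the comparison inequality holds with equality. -/
def FlatCAT0 (X : Type*) [MetricSpace X] : Prop :=
  GeodesicSpace X ∧
    ∀ (x y z : X) (γ : ℝ → X), IsGeodesic x y γ → ∀ t ∈ Set.Icc (0 : ℝ) 1,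
      dist (γ (t * dist x y)) z ^ 2 =
        (1 - t) * dist x z ^ 2 + t * dist y z ^ 2 - t * (1 - t) * dist x y ^ 2

/-- Convexity: a set containing every geodesic segment between its points. -/
def GConvex {X : Type*} [MetricSpace X] (C : Set X) : Prop :=
  ∀ x ∈ C, ∀ y ∈ C, segs x y ⊆ C

/-- The (geodesic) convex hull: the smallest convex set containing `S`. -/
def gconvHull {X : Type*} [MetricSpace X] (S : Set X) : Set X :=
  ⋂₀ {C : Set X | GConvex C ∧ S ⊆ C}

/-- Threading of a set: the union of all geodesic segments with endpoints in `S`. -/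
def thr {X : Type*} [MetricSpace X] (S : Set X) : Set X :=
  ⋃ x ∈ S, ⋃ y ∈ S, segs x y

/-- Painlevé–Kuratowski outer limit of a net of sets. -/
def pkLimsup {ι : Type*} [Preorder ι] {X : Type*} [TopologicalSpace X] (S : ι → Set X) :
    Set X :=
  {x | ∀ V ∈ nhds x, ∀ a : ι, ∃ b, a ≤ b ∧ (V ∩ S b).Nonempty}

/-- Painlevé–Kuratowski inner limit of a net of sets. -/
def pkLiminf {ι : Type*} [Preorder ι] {X : Type*} [TopologicalSpace X] (S : ι → Set X) :
    Set X :=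
  {x | ∀ V ∈ nhds x, ∃ a : ι, ∀ b, a ≤ b → (V ∩ S b).Nonempty}

theorem pkLiminf_eq_closure {ι : Type*} [Preorder ι] {X : Type*} [TopologicalSpace X]
    {K : ι → Set X} (hK : Monotone K) : pkLiminf K = closure (⋃ a, K a) := by
  ext x
  rw [mem_closure_iff_nhds]
  constructor
  · intro hx V hV
    obtain ⟨a, ha⟩ := hx V hV
    exact (ha a le_rfl).mono (inter_subset_inter_right _ (subset_iUnion K a))
  · intro hx V hV
    obtain ⟨y, hyV, hy⟩ := hx V hV
    obtain ⟨a, ha⟩ := mem_iUnion.1 hy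
    exact ⟨a, fun b hb => ⟨y, hyV, hK hb ha⟩⟩

theorem pkLimsup_eq_closure {ι : Type*} [Preorder ι] [Nonempty ι] [IsDirected ι (· ≤ ·)]
    {X : Type*} [TopologicalSpace X] {K : ι → Set X} (hK : Monotone K) :
    pkLimsup K = closure (⋃ a, K a) := by
  ext x
  rw [mem_closure_iff_nhds]
  constructor
  · intro hx V hV
    obtain ⟨b, -, hb⟩ := hx V hV (Classical.arbitrary ι)
    exact hb.mono (inter_subset_inter_right _ (subset_iUnion K b))
  · intro hx V hV a
    obtain ⟨y, hyV, hy⟩ := hx V hV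
    obtain ⟨c, hc⟩ := mem_iUnion.1 hy
    obtain ⟨b, hab, hcb⟩ := exists_ge_ge a c
    exact ⟨b, hab, y, hyV, hK hcb hc⟩

/-- The witness is the point at parameter `min r (dist x y)` on a geodesic from `x` to `y`. -/
theorem exists_mem_closedBall_dist_le {X : Type*} [MetricSpace X] (hgeo : GeodesicSpace X)
    {x y : X} {r δ : ℝ} (hr : 0 ≤ r) (hδ : 0 ≤ δ) (hy : y ∈ Metric.closedBall x (r + δ)) :
    ∃ z ∈ Metric.closedBall x r, dist y z ≤ δ := by
  obtain ⟨γ, h0, h1, hγ⟩ := hgeo x y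
  have hd : dist x y ≤ r + δ := by rwa [Metric.mem_closedBall, dist_comm] at hy
  have hd0 : 0 ≤ dist x y := dist_nonneg
  have ht0 : 0 ≤ min r (dist x y) := le_min hr hd0
  have ht : min r (dist x y) ∈ Icc 0 (dist x y) := ⟨ht0, min_le_right _ _⟩
  refine ⟨γ (min r (dist x y)), ?_, ?_⟩
  · have h := hγ _ ht 0 ⟨le_rfl, hd0⟩
    rw [h0, sub_zero, abs_of_nonneg ht0] at h
    rw [Metric.mem_closedBall, h]
    exact min_le_left _ _
  · have h := hγ _ ⟨hd0, le_rfl⟩ _ ht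
    rw [h1, abs_of_nonneg (sub_nonneg.2 ht.2)] at h
    rw [h]
    rcases min_cases r (dist x y) with h' | h' <;> linarith [h'.1]

/-- The Hopf–Rinow–Cohn-Vossen theorem: a complete locally compact geodesic space is proper. -/
theorem isCompact_closedBall_of_geodesic {X : Type*} [MetricSpace X] [CompleteSpace X]
    [LocallyCompactSpace X] (hgeo : GeodesicSpace X) (x : X) (r : ℝ) :
    IsCompact (Metric.closedBall x r) := by
  set S : Set ℝ := {r | IsCompact (Metric.closedBall x r)} with hS
  have hdown : ∀ s ∈ S, ∀ t ≤ s, t ∈ S := fun s hs t ht =>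
    IsCompact.of_isClosed_subset hs Metric.isClosed_closedBall (Metric.closedBall_subset_closedBall ht)
  have h0 : (0 : ℝ) ∈ S := by simp [hS]
  by_contra hr
  have hub : ∀ s ∈ S, s ≤ r := fun s hs => by
    by_contra! h
    exact hr (hdown s hs r h.le)
  have hbdd : BddAbove S := ⟨r, hub⟩
  set R := sSup S
  have hR0 : 0 ≤ R := le_csSup hbdd h0
  have hlt : ∀ s < R, s ∈ S := fun s hs => by
    obtain ⟨t, ht, hst⟩ := exists_lt_of_lt_csSup ⟨0, h0⟩ hs
    exact hdown t ht s hst.le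
  have hR : R ∈ S := by
    rcases hR0.eq_or_lt with h | hpos
    · rwa [← h]
    refine TotallyBounded.isCompact_of_isClosed ?_ Metric.isClosed_closedBall
    rw [Metric.totallyBounded_iff]
    intro ε hε
    -- A finite `ε/2`-net of the compact ball of radius `R - δ` is an `ε`-net of the ball of radius `R`.
    obtain ⟨δ, hδ0, hδ⟩ : ∃ δ, 0 < δ ∧ δ < ε / 2 ∧ δ ≤ R :=
      ⟨min (ε / 4) R, lt_min (by linarith) hpos,
        (min_le_left _ _).trans_lt (by linarith), min_le_right _ _⟩
    obtain ⟨t, htf, ht⟩ := Metric.totallyBounded_iff.1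
      (hlt (R - δ) (by linarith)).totallyBounded (ε / 2) (by linarith)
    refine ⟨t, htf, fun y hy => ?_⟩
    obtain ⟨z, hz, hyz⟩ := exists_mem_closedBall_dist_le hgeo (r := R - δ) (δ := δ)
      (sub_nonneg.2 hδ.2) hδ0.le (by simpa using hy)
    obtain ⟨w, hw, hzw⟩ := mem_iUnion₂.1 (ht hz)
    refine mem_iUnion₂.2 ⟨w, hw, ?_⟩
    rw [Metric.mem_ball] at hzw ⊢
    linarith [dist_triangle y z w, hδ.1]
  obtain ⟨δ, hδ, hc⟩ := IsCompact.exists_isCompact_cthickening hR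
  have hmem : R + δ ∈ S := by
    refine hc.of_isClosed_subset Metric.isClosed_closedBall fun y hy => ?_
    obtain ⟨z, hz, hyz⟩ := exists_mem_closedBall_dist_le hgeo hR0 hδ.le hy
    exact Metric.mem_cthickening_of_dist_le y z δ _ hz hyz
  linarith [le_csSup hbdd hmem]

/-- A complete geodesic metric space is locally compact if and only if it is regular,
i.e. every bounded nondecreasing chain of compact sets has a compact
Painlevé–Kuratowski limit. -/
theorem locallyCompact_iff_regular {X : Type*} [MetricSpace X] [CompleteSpace X]
    (hgeo : GeodesicSpace X) :
    LocallyCompactSpace X ↔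
      ∀ (ι : Type) [Preorder ι] [Nonempty ι] [IsDirected ι (· ≤ ·)] (K : ι → Set X),
        Monotone K → (∀ a, IsCompact (K a)) → Bornology.IsBounded (⋃ a, K a) →
          pkLiminf K = pkLimsup K ∧ IsCompact (pkLiminf K) := by
  constructor
  · intro _ ι _ _ _ K hK _ hb
    have : ProperSpace X := ⟨isCompact_closedBall_of_geodesic hgeo⟩
    rw [pkLiminf_eq_closure hK, pkLimsup_eq_closure hK]
    exact ⟨rfl, hb.isCompact_closure⟩
  · intro h
    have : ProperSpace X := by
      refine ⟨fun x r => IsSeqCompact.isCompact fun u hu => ?_⟩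
      have hmono : Monotone fun n : ℕ => u '' Iic n := fun m n hmn =>
        image_mono (Iic_subset_Iic.2 hmn)
      have hb : Bornology.IsBounded (⋃ n : ℕ, u '' Iic n) := by
        refine Metric.isBounded_closedBall.subset (iUnion_subset fun n => ?_) (t := Metric.closedBall x r)
        rintro _ ⟨m, -, rfl⟩
        exact hu m
      have hc := (h ℕ _ hmono (fun n => ((finite_Iic n).image u).isCompact) hb).2
      rw [pkLiminf_eq_closure hmono] at hc
      obtain ⟨a, -, φ, hφ, hlim⟩ := hc.tendsto_subseq (x := u) fun n =>
        subset_closure (mem_iUnion.2 ⟨n, mem_image_of_mem u self_mem_Iic⟩)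
      exact ⟨a, Metric.isClosed_closedBall.mem_of_tendsto hlim
        (Filter.Eventually.of_forall fun n => hu _), φ, hφ, hlim⟩
    infer_instance
end

section
/- A complete CAT(0) space is locally compact if and only if it is regular, i.e. if and only if for every bounded nondecreasing chain of compact sets (K_α)_{α∈A}, the Painlevé–Kuratowski limit Lim_α K_α is compact. -/
/-!
For a monotone net the inner and the outer limit both equal the closure of the union, so regularity
says that bounded directed unions of compact sets are relatively compact.

If `X` is locally compact, the Hopf–Rinow argument shows that closed balls are compact: the radii
`r` for which `closedBall x r` is compact form a set that is open (a compact set has a compact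
thickening, and in a geodesic space `closedBall x (r + δ)` lies in the `δ`-thickening of
`closedBall x r`) and closed (a ball whose smaller concentric balls are all compact is totally
bounded, by the same inclusion). Hence bounded closed sets are compact.

Conversely, the finite sets `{u 0, …, u n}` built from a bounded sequence `u` form a bounded
chain, so regularity puts `u` into a compact set and it has a convergent subsequence; closed balls
are therefore compact. The comparison inequality plays no part beyond geodesicity and completeness.
-/


open Set

/-- In a geodesic space, `closedBall x (r + δ)` lies within distance `δ` of `closedBall x r`. -/
theorem GeodesicSpace.exists_mem_closedBall {X : Type*} [MetricSpace X] (hX : GeodesicSpace X)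
    {x y : X} {r δ : ℝ} (hr : 0 ≤ r) (hδ : 0 ≤ δ) (hy : y ∈ Metric.closedBall x (r + δ)) :
    ∃ z ∈ Metric.closedBall x r, dist y z ≤ δ := by
  rw [Metric.mem_closedBall, dist_comm] at hy
  rcases le_total (dist x y) r with h | h
  · exact ⟨y, by rwa [Metric.mem_closedBall, dist_comm], by simpa using hδ⟩
  · obtain ⟨γ, h0, h1, hγ⟩ := hX x y
    refine ⟨γ r, ?_, ?_⟩
    · have := hγ r ⟨hr, h⟩ 0 ⟨le_rfl, dist_nonneg⟩
      rw [h0, sub_zero, abs_of_nonneg hr] at this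
      exact this.le
    · have := hγ (dist x y) ⟨dist_nonneg, le_rfl⟩ r ⟨hr, h⟩
      rw [h1, abs_of_nonneg (sub_nonneg.2 h)] at this
      linarith

/-- The Hopf–Rinow theorem for geodesic spaces. -/
theorem GeodesicSpace.properSpace {X : Type*} [MetricSpace X] [CompleteSpace X]
    [LocallyCompactSpace X] (hX : GeodesicSpace X) : ProperSpace X := by
  refine ⟨fun x => ?_⟩
  have hopen : ∀ r, 0 ≤ r → IsCompact (Metric.closedBall x r) →
      ∃ δ, 0 < δ ∧ IsCompact (Metric.closedBall x (r + δ)) := by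
    intro r hr hc
    obtain ⟨δ, hδ, hcδ⟩ := hc.exists_isCompact_cthickening
    refine ⟨δ, hδ, hcδ.of_isClosed_subset Metric.isClosed_closedBall fun y hy => ?_⟩
    obtain ⟨z, hz, hyz⟩ := hX.exists_mem_closedBall hr hδ.le hy
    exact Metric.mem_cthickening_of_dist_le y z δ _ hz hyz
  have hclosed : ∀ R, 0 < R → (∀ r, r < R → IsCompact (Metric.closedBall x r)) →
      IsCompact (Metric.closedBall x R) := by
    intro R hR h
    refine TotallyBounded.isCompact_of_isClosed ?_ Metric.isClosed_closedBall
    refine Metric.totallyBounded_iff.2 fun ε hε => ?_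
    -- Truncating at `0` keeps the smaller radius nonnegative when `ε` is large.
    have hlt : max (R - ε / 2) 0 < R := max_lt (by linarith) hR
    obtain ⟨t, ht, hcov⟩ := Metric.totallyBounded_iff.1 (h _ hlt).totallyBounded (ε / 2)
      (by linarith)
    refine ⟨t, ht, fun y hy => ?_⟩
    obtain ⟨z, hz, hyz⟩ := hX.exists_mem_closedBall (r := max (R - ε / 2) 0) (δ := ε / 2)
      (le_max_right _ _) (by linarith)
      (Metric.closedBall_subset_closedBall (by linarith [le_max_left (R - ε / 2) 0]) hy)
    obtain ⟨w, hw, hzw⟩ := Set.mem_iUnion₂.1 (hcov hz)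
    refine Set.mem_iUnion₂.2 ⟨w, hw, ?_⟩
    rw [Metric.mem_ball] at hzw ⊢
    linarith [dist_triangle y z w]
  have mono : ∀ r s, r ≤ s → IsCompact (Metric.closedBall x s) →
      IsCompact (Metric.closedBall x r) := fun r s hrs hs =>
    hs.of_isClosed_subset Metric.isClosed_closedBall (Metric.closedBall_subset_closedBall hrs)
  by_contra! hne
  obtain ⟨r₀, hr₀⟩ := hne
  have h0 : IsCompact (Metric.closedBall x 0) := by simp
  let A : Set ℝ := {r | IsCompact (Metric.closedBall x r)}
  have hbdd : BddAbove A := ⟨r₀, fun r hr => by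
    by_contra! hlt
    exact hr₀ (mono _ _ hlt.le hr)⟩
  obtain ⟨δ, hδ, hcδ⟩ := hopen 0 le_rfl h0
  have hpos : 0 < sSup A := by
    have : 0 + δ ≤ sSup A := le_csSup hbdd hcδ
    linarith
  have hsup : IsCompact (Metric.closedBall x (sSup A)) := hclosed _ hpos fun r hr => by
    obtain ⟨s, hs, hrs⟩ := exists_lt_of_lt_csSup ⟨0, h0⟩ hr
    exact mono _ _ hrs.le hs
  obtain ⟨η, hη, hcη⟩ := hopen _ hpos.le hsup
  have : sSup A + η ≤ sSup A := le_csSup hbdd hcη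
  linarith

/-- A complete CAT(0) space is locally compact if and only if it is regular,
i.e. every bounded nondecreasing chain of compact sets has a compact
Painlevé–Kuratowski limit. -/
theorem cat0_locallyCompact_iff_regular {X : Type*} [MetricSpace X] [CompleteSpace X]
    (hX : CAT0 X) :
    LocallyCompactSpace X ↔
      ∀ (ι : Type) [Preorder ι] [Nonempty ι] [IsDirected ι (· ≤ ·)] (K : ι → Set X),
        Monotone K → (∀ a, IsCompact (K a)) → Bornology.IsBounded (⋃ a, K a) →
          pkLiminf K = pkLimsup K ∧ IsCompact (pkLiminf K) := by
  constructor
  · intro _ ι _ _ _ K hK _ hb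
    have := hX.1.properSpace
    rw [pkLiminf_eq_closure hK, pkLimsup_eq_closure hK]
    exact ⟨rfl, hb.isCompact_closure⟩
  · intro h
    have : ProperSpace X := by
      refine ⟨fun x r => IsSeqCompact.isCompact fun u hu => ?_⟩
      have hmono : Monotone fun n : ℕ => u '' Set.Iic n :=
        fun _ _ hmn => Set.image_mono (Set.Iic_subset_Iic.2 hmn)
      have hb : Bornology.IsBounded (⋃ n : ℕ, u '' Set.Iic n) := by
        refine (Metric.isBounded_closedBall (x := x) (r := r)).subset ?_
        rintro y hy
        obtain ⟨n, k, -, rfl⟩ := Set.mem_iUnion.1 hy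
        exact hu k
      obtain ⟨-, hc⟩ := h ℕ _ hmono (fun n => ((Set.finite_Iic n).image u).isCompact) hb
      rw [pkLiminf_eq_closure hmono] at hc
      obtain ⟨a, -, φ, hφ, hlim⟩ := hc.isSeqCompact (x := u) fun n =>
        subset_closure (Set.mem_iUnion.2 ⟨n, n, Set.self_mem_Iic, rfl⟩)
      exact ⟨a, Metric.isClosed_closedBall.mem_of_tendsto hlim
        (Filter.Eventually.of_forall fun n => hu _), φ, hφ, hlim⟩
    infer_instance
end

section
/- Let (X,d) be a complete CAT(0) space and K ⊆ X a compact set. Then thrⁿ K is compact for every n∈ℕ. -/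
/-!
In a CAT(0) space write `G (x, y, t)` for the point of the segment from `x` to `y` at parameter
`t ∈ [0, 1]`. Geodesics are unique, so `thr S` is the image of `S × S × [0, 1]` under `G`, and it
suffices that `G` is continuous there. Fix `(x₀, y₀, t₀)` and let `m = G (x₀, y₀, t₀)`. The CAT(0)
inequality with third vertex `m` gives
`d(G (x, y, t), m)² ≤ (1 - t) d(x, m)² + t d(y, m)² - t (1 - t) d(x, y)²`.
The right side is continuous in `(x, y, t)` and vanishes at `(x₀, y₀, t₀)`, because
`d(x₀, m) = t₀ d(x₀, y₀)` and `d(y₀, m) = (1 - t₀) d(x₀, y₀)`. Hence `G` is continuous. The same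
vanishing, applied to a point of a second geodesic between the same endpoints, gives uniqueness.
-/

open Set

lemma IsGeodesic.mul_mem {X : Type*} [MetricSpace X] (x y : X) {t : ℝ}
    (ht : t ∈ Set.Icc (0 : ℝ) 1) : t * dist x y ∈ Set.Icc (0 : ℝ) (dist x y) :=
  ⟨mul_nonneg ht.1 dist_nonneg, mul_le_of_le_one_left dist_nonneg ht.2⟩

lemma IsGeodesic.dist_left {X : Type*} [MetricSpace X] {x y : X} {γ : ℝ → X}
    (h : IsGeodesic x y γ) {t : ℝ} (ht : t ∈ Set.Icc (0 : ℝ) 1) :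
    dist x (γ (t * dist x y)) = t * dist x y := by
  have h1 := h.2.2 0 ⟨le_rfl, dist_nonneg⟩ _ (IsGeodesic.mul_mem x y ht)
  rw [h.1, zero_sub, abs_neg, abs_of_nonneg (IsGeodesic.mul_mem x y ht).1] at h1
  exact h1

lemma IsGeodesic.dist_right {X : Type*} [MetricSpace X] {x y : X} {γ : ℝ → X}
    (h : IsGeodesic x y γ) {t : ℝ} (ht : t ∈ Set.Icc (0 : ℝ) 1) :
    dist y (γ (t * dist x y)) = (1 - t) * dist x y := by
  have h1 := h.2.2 (dist x y) ⟨dist_nonneg, le_rfl⟩ _ (IsGeodesic.mul_mem x y ht)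
  rw [h.2.1, abs_of_nonneg (sub_nonneg.2 (IsGeodesic.mul_mem x y ht).2)] at h1
  rw [h1]; ring

/-- The right side of the CAT(0) inequality vanishes when the third vertex is the point at the
same parameter of a geodesic with the same endpoints. -/
lemma IsGeodesic.comparison_eq_zero {X : Type*} [MetricSpace X] {x y : X} {γ : ℝ → X}
    (h : IsGeodesic x y γ) {t : ℝ} (ht : t ∈ Set.Icc (0 : ℝ) 1) :
    (1 - t) * dist x (γ (t * dist x y)) ^ 2 + t * dist y (γ (t * dist x y)) ^ 2
      - t * (1 - t) * dist x y ^ 2 = 0 := by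
  rw [h.dist_left ht, h.dist_right ht]; ring

lemma CAT0.geodesic_unique {X : Type*} [MetricSpace X] (hX : CAT0 X) {x y : X} {γ₁ γ₂ : ℝ → X}
    (h₁ : IsGeodesic x y γ₁) (h₂ : IsGeodesic x y γ₂) {t : ℝ} (ht : t ∈ Set.Icc (0 : ℝ) 1) :
    γ₁ (t * dist x y) = γ₂ (t * dist x y) := by
  have h := hX.2 x y (γ₂ (t * dist x y)) γ₁ h₁ t ht
  rw [h₂.comparison_eq_zero ht] at h
  exact dist_eq_zero.1 (pow_eq_zero_iff two_ne_zero |>.1 (le_antisymm h (sq_nonneg _)))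

lemma CAT0.continuousOn_geodesic {X : Type*} [MetricSpace X] (hX : CAT0 X) (g : X → X → ℝ → X)
    (hg : ∀ x y, IsGeodesic x y (g x y)) (S : Set X) :
    ContinuousOn (fun p : X × X × ℝ => g p.1 p.2.1 (p.2.2 * dist p.1 p.2.1))
      (S ×ˢ S ×ˢ Set.Icc (0 : ℝ) 1) := by
  rintro ⟨x, y, t⟩ ⟨-, -, ht⟩
  set m := g x y (t * dist x y) with hm
  let F : X × X × ℝ → ℝ := fun p => (1 - p.2.2) * dist p.1 m ^ 2 + p.2.2 * dist p.2.1 m ^ 2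
    - p.2.2 * (1 - p.2.2) * dist p.1 p.2.1 ^ 2
  have hF : Continuous F := by fun_prop
  have hF0 : F (x, y, t) = 0 := (hg x y).comparison_eq_zero ht
  have hlim : Filter.Tendsto (fun p => √(F p))
      (nhdsWithin (x, y, t) (S ×ˢ S ×ˢ Set.Icc (0 : ℝ) 1)) (nhds 0) := by
    have := (Real.continuous_sqrt.comp hF).tendsto (x, y, t)
    simp only [Function.comp_def, hF0, Real.sqrt_zero] at this
    exact this.mono_left nhdsWithin_le_nhds
  refine tendsto_iff_dist_tendsto_zero.2 ?_
  refine squeeze_zero' (Filter.Eventually.of_forall fun _ => dist_nonneg) ?_ hlim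
  filter_upwards [self_mem_nhdsWithin] with p hp
  exact Real.le_sqrt_of_sq_le (hX.2 p.1 p.2.1 m _ (hg _ _) p.2.2 hp.2.2)

lemma CAT0.thr_eq_image {X : Type*} [MetricSpace X] (hX : CAT0 X) (g : X → X → ℝ → X)
    (hg : ∀ x y, IsGeodesic x y (g x y)) (S : Set X) :
    thr S = (fun p : X × X × ℝ => g p.1 p.2.1 (p.2.2 * dist p.1 p.2.1)) ''
      (S ×ˢ S ×ˢ Set.Icc (0 : ℝ) 1) := by
  ext z
  simp only [thr, segs, Set.mem_iUnion, Set.mem_image, Set.mem_ofPred_eq, exists_prop]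
  constructor
  · rintro ⟨x, hx, y, hy, γ, hγ, s, hs, rfl⟩
    have ht : s / dist x y ∈ Set.Icc (0 : ℝ) 1 :=
      ⟨div_nonneg hs.1 dist_nonneg, div_le_one_of_le₀ hs.2 dist_nonneg⟩
    -- When `dist x y = 0` also `s = 0`, so the identity survives division by zero.
    have hst : s / dist x y * dist x y = s :=
      div_mul_cancel_of_imp fun h0 => le_antisymm (h0 ▸ hs.2) hs.1
    refine ⟨(x, y, s / dist x y), ⟨hx, hy, ht⟩, ?_⟩
    have h := hX.geodesic_unique (hg x y) hγ ht
    rw [hst] at h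
    simpa only [hst] using h
  · rintro ⟨⟨x, y, t⟩, ⟨hx, hy, ht⟩, rfl⟩
    exact ⟨x, hx, y, hy, g x y, hg x y, _, IsGeodesic.mul_mem x y ht, rfl⟩

lemma CAT0.isCompact_thr {X : Type*} [MetricSpace X] (hX : CAT0 X) {S : Set X}
    (hS : IsCompact S) : IsCompact (thr S) := by
  choose g hg using hX.1
  rw [hX.thr_eq_image g hg]
  exact (hS.prod (hS.prod isCompact_Icc)).image_of_continuousOn (hX.continuousOn_geodesic g hg S)

/-- Iterated threadings of a compact set in a complete CAT(0) space are compact. -/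
theorem thr_iterate_compact {X : Type*} [MetricSpace X] [CompleteSpace X]
    (hX : CAT0 X) (K : Set X) (hK : IsCompact K) (n : ℕ) :
    IsCompact (thr^[n] K) := by
  induction n with
  | zero => exact hK
  | succ n ih =>
    rw [Function.iterate_succ_apply']
    exact hX.isCompact_thr ih
end

section
/- Let (X,d) be a flat complete CAT(0) space and K ⊆ X a compact set. Then cl co K is compact. If additionally K is finite, then the convex hull co K itself is compact. -/
/-!
Everything is read off from squared distances. In a flat space the point `(1 - t)x ⊕ ty` is
characterised by the identity `IsComb t x y w`, which says that `z ↦ d(w, z)²` is determined by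
`d(x, ·)`, `d(y, ·)` and `t`. Hence the differences `w ↦ d(w, z)² - d(w, p)²` are affine along
geodesics, and together they separate points.

For finite `F` the hull is compact by induction. The join of a point `a` with a convex set `C` (the
union of the segments `[a, y]`, `y ∈ C`) is again convex; this is the barycentric computation of a
vector space, transported to `X` by the separating affine functions (`FlatCAT0.gconvex_join`). The join is
the continuous image of `[0, 1] × C`, hence compact if `C` is.

For compact `K`, the map `(x, y) ↦ d(x, y)` is convex along pairs of geodesics
(`FlatCAT0.dist_comb_le`), so the open `ε`-neighbourhood of a convex set is convex. If `F` is a finite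
`ε`-net of `K`, then `co K` lies in the `ε`-neighbourhood of the compact set `co F`. Thus
`co K` is totally bounded, and completeness of `X` makes its closure compact.
-/

open Set

open Metric Topology

/-- `w` is the point `(1 - t)x ⊕ ty`, expressed by its squared distances to all points. -/
def IsComb {X : Type*} [MetricSpace X] (t : ℝ) (x y w : X) : Prop :=
  ∀ z, dist w z ^ 2 = (1 - t) * dist x z ^ 2 + t * dist y z ^ 2 - t * (1 - t) * dist x y ^ 2

section

variable {X : Type*} [MetricSpace X]

/-- The functions `x ↦ d(x, z)² - d(x, p)²` separate points. -/
lemma eq_of_sq_dist_sub {x y : X}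
    (h : ∀ z p, dist x z ^ 2 - dist x p ^ 2 = dist y z ^ 2 - dist y p ^ 2) : x = y := by
  have h1 := h x y
  rw [dist_self, dist_self, dist_comm y x] at h1
  have h2 : dist x y ^ 2 = 0 := by linarith
  exact dist_eq_zero.1 (pow_eq_zero_iff two_ne_zero |>.1 h2)

lemma IsComb.unique {t : ℝ} {x y w w' : X} (h : IsComb t x y w) (h' : IsComb t x y w') :
    w = w' :=
  eq_of_sq_dist_sub fun z p => by rw [h z, h p, h' z, h' p]

/-- The functions `x ↦ d(x, z)² - d(x, p)²` are affine along geodesics. -/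
lemma IsComb.affine {t : ℝ} {x y w : X} (h : IsComb t x y w) (z p : X) :
    dist w z ^ 2 - dist w p ^ 2 =
      (1 - t) * (dist x z ^ 2 - dist x p ^ 2) + t * (dist y z ^ 2 - dist y p ^ 2) := by
  rw [h z, h p]; ring

lemma FlatCAT0.isComb (hX : FlatCAT0 X) {x y : X} {γ : ℝ → X} (hγ : IsGeodesic x y γ) {t : ℝ}
    (ht : t ∈ Icc (0 : ℝ) 1) : IsComb t x y (γ (t * dist x y)) :=
  fun z => hX.2 x y z γ hγ t ht

lemma mul_dist_mem {x y : X} {t : ℝ} (ht : t ∈ Icc (0 : ℝ) 1) :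
    t * dist x y ∈ Icc (0 : ℝ) (dist x y) :=
  ⟨mul_nonneg ht.1 dist_nonneg, mul_le_of_le_one_left dist_nonneg ht.2⟩

lemma FlatCAT0.exists_isComb (hX : FlatCAT0 X) (x y : X) {t : ℝ} (ht : t ∈ Icc (0 : ℝ) 1) :
    ∃ w, IsComb t x y w := by
  obtain ⟨γ, hγ⟩ := hX.1 x y
  exact ⟨_, hX.isComb hγ ht⟩

lemma FlatCAT0.mem_segs (hX : FlatCAT0 X) {x y w : X} :
    w ∈ segs x y ↔ ∃ t ∈ Icc (0 : ℝ) 1, IsComb t x y w := by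
  constructor
  · intro hw
    simp only [segs, mem_iUnion, mem_ofPred_eq] at hw
    obtain ⟨γ, hγ, s, hs, rfl⟩ := hw
    -- for `x = y` the quotient is `0`, and then `s = 0`
    have hs' : s = s / dist x y * dist x y := by
      rcases eq_or_ne (dist x y) 0 with h0 | h0
      · rw [h0] at hs ⊢
        simpa using le_antisymm hs.2 hs.1
      · field_simp
    have ht : s / dist x y ∈ Icc (0 : ℝ) 1 :=
      ⟨div_nonneg hs.1 dist_nonneg, div_le_one_of_le₀ hs.2 dist_nonneg⟩
    refine ⟨_, ht, ?_⟩
    have := hX.isComb hγ ht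
    rwa [← hs'] at this
  · rintro ⟨t, ht, h⟩
    obtain ⟨γ, hγ⟩ := hX.1 x y
    rw [h.unique (hX.isComb hγ ht)]
    simp only [segs, mem_iUnion, mem_ofPred_eq]
    exact ⟨γ, hγ, _, mul_dist_mem ht, rfl⟩

lemma FlatCAT0.gconvex_iff (hX : FlatCAT0 X) {C : Set X} :
    GConvex C ↔ ∀ x ∈ C, ∀ y ∈ C, ∀ t ∈ Icc (0 : ℝ) 1, ∀ w, IsComb t x y w → w ∈ C := by
  refine ⟨fun h x hx y hy t ht w hw => h x hx y hy (hX.mem_segs.2 ⟨t, ht, hw⟩), ?_⟩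
  intro h x hx y hy w hw
  obtain ⟨t, ht, hw⟩ := hX.mem_segs.1 hw
  exact h x hx y hy t ht w hw

lemma IsComb.symm {t : ℝ} {x y w : X} (h : IsComb t x y w) : IsComb (1 - t) y x w := by
  intro z
  rw [h z, dist_comm y x]; ring

lemma isComb_zero (x y : X) : IsComb 0 x y x := fun z => by ring

lemma isComb_one (x y : X) : IsComb 1 x y y := fun z => by ring

/-- Homotheties centred at `a` scale distances exactly, as in a Euclidean space. -/
lemma IsComb.dist_eq {t : ℝ} (ht : 0 ≤ t) {a x y u v : X} (hu : IsComb t a x u)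
    (hv : IsComb t a y v) : dist u v = t * dist x y := by
  have h1 := hu v
  have h2 := hv a
  have h3 := hv x
  rw [dist_comm v a, dist_self, dist_comm y a] at h2
  rw [dist_comm v x, dist_comm y x] at h3
  rw [h2, h3] at h1
  have h4 : dist u v ^ 2 = (t * dist x y) ^ 2 := by rw [h1]; ring
  exact (pow_left_inj₀ dist_nonneg (mul_nonneg ht dist_nonneg) two_ne_zero).1 h4

/-- Convexity of the metric along pairs of geodesics. -/
lemma FlatCAT0.dist_comb_le (hX : FlatCAT0 X) {t : ℝ} (ht : t ∈ Icc (0 : ℝ) 1)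
    {x y x' y' u v : X} (hu : IsComb t x y u) (hv : IsComb t x' y' v) :
    dist u v ≤ (1 - t) * dist x x' + t * dist y y' := by
  -- compare both points with the corresponding point of the diagonal from `x` to `y'`
  obtain ⟨w, hw⟩ := hX.exists_isComb x y' ht
  have h1 : dist u w = t * dist y y' := hu.dist_eq ht.1 hw
  have h2 : dist w v = (1 - t) * dist x x' :=
    hw.symm.dist_eq (sub_nonneg.2 ht.2) hv.symm
  linarith [dist_triangle u w v]

lemma gconvex_gconvHull (S : Set X) : GConvex (gconvHull S) := by
  intro x hx y hy w hw C hC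
  exact hC.1 x (hx C hC) y (hy C hC) hw

lemma subset_gconvHull (S : Set X) : S ⊆ gconvHull S := fun _ hx _ hC => hC.2 hx

lemma gconvHull_subset {S C : Set X} (hC : GConvex C) (h : S ⊆ C) : gconvHull S ⊆ C :=
  fun _ hx => hx C ⟨hC, h⟩

lemma gconvHull_mono {S T : Set X} (h : S ⊆ T) : gconvHull S ⊆ gconvHull T :=
  gconvHull_subset (gconvex_gconvHull T) (h.trans (subset_gconvHull T))

/-- The join of a point with a convex set is convex. -/
lemma FlatCAT0.gconvex_join (hX : FlatCAT0 X) (a : X) {C : Set X} (hC : GConvex C) :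
    GConvex {w | ∃ y ∈ C, ∃ t ∈ Icc (0 : ℝ) 1, IsComb t a y w} := by
  rw [hX.gconvex_iff] at hC ⊢
  rintro u ⟨y, hy, s, hs, hu⟩ v ⟨z, hz, r, hr, hv⟩ t ht w hw
  -- `w` has barycentric weights `(1 - t)s` at `y`, `tr` at `z`, and the rest at `a`
  have h1 : 0 ≤ (1 - t) * s := mul_nonneg (sub_nonneg.2 ht.2) hs.1
  have h2 : 0 ≤ t * r := mul_nonneg ht.1 hr.1
  have hτ : (1 - t) * s + t * r ∈ Icc (0 : ℝ) 1 := by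
    refine ⟨add_nonneg h1 h2, ?_⟩
    nlinarith [mul_nonneg (sub_nonneg.2 ht.2) (sub_nonneg.2 hs.2),
      mul_nonneg ht.1 (sub_nonneg.2 hr.2)]
  obtain ⟨l, hl, hlτ⟩ : ∃ l ∈ Icc (0 : ℝ) 1, l * ((1 - t) * s + t * r) = t * r := by
    rcases eq_or_ne ((1 - t) * s + t * r) 0 with h0 | h0
    · exact ⟨0, ⟨le_rfl, zero_le_one⟩, by linarith⟩
    · exact ⟨t * r / ((1 - t) * s + t * r),
        ⟨div_nonneg h2 hτ.1, div_le_one_of_le₀ (by linarith) hτ.1⟩, div_mul_cancel₀ _ h0⟩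
  obtain ⟨q, hq⟩ := hX.exists_isComb y z hl
  obtain ⟨w', hw'⟩ := hX.exists_isComb a q hτ
  have : w = w' := by
    refine eq_of_sq_dist_sub fun b p => ?_
    rw [hw.affine, hu.affine, hv.affine, hw'.affine, hq.affine]
    linear_combination ((dist y b ^ 2 - dist y p ^ 2) - (dist z b ^ 2 - dist z p ^ 2)) * hlτ
  exact ⟨q, hC y hy z hz l hl q hq, _, hτ, this ▸ hw'⟩

lemma FlatCAT0.isCompact_join (hX : FlatCAT0 X) (a : X) {C : Set X} (hC : IsCompact C) :
    IsCompact {w | ∃ y ∈ C, ∃ t ∈ Icc (0 : ℝ) 1, IsComb t a y w} := by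
  choose c hc using fun q : unitInterval × X => hX.exists_isComb a q.2 q.1.2
  have hcont : Continuous c := by
    refine continuous_iff_continuousAt.2 fun q₀ => ?_
    rw [ContinuousAt, tendsto_iff_dist_tendsto_zero]
    have h1 : Continuous fun q : unitInterval × X => dist (c q) (c q₀) ^ 2 := by
      simp only [hc _ (c q₀)]
      fun_prop
    have h2 : Continuous fun q : unitInterval × X => dist (c q) (c q₀) := by
      simpa [Real.sqrt_sq dist_nonneg] using h1.sqrt
    simpa using h2.tendsto q₀
  convert (isCompact_univ.prod hC).image hcont using 1
  ext w
  constructor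
  · rintro ⟨y, hy, t, ht, hw⟩
    exact ⟨(⟨t, ht⟩, y), ⟨mem_univ _, hy⟩, (hc (⟨t, ht⟩, y)).unique hw⟩
  · rintro ⟨q, hq, rfl⟩
    exact ⟨q.2, hq.2, q.1, q.1.2, hc q⟩

lemma FlatCAT0.gconvHull_insert (hX : FlatCAT0 X) (a : X) {F : Set X} (hF : F.Nonempty) :
    gconvHull (insert a F) =
      {w | ∃ y ∈ gconvHull F, ∃ t ∈ Icc (0 : ℝ) 1, IsComb t a y w} := by
  apply Subset.antisymm
  · refine gconvHull_subset (hX.gconvex_join a (gconvex_gconvHull F)) ?_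
    rintro x (rfl | hx)
    · obtain ⟨y, hy⟩ := hF
      exact ⟨y, subset_gconvHull F hy, 0, by simp, isComb_zero _ _⟩
    · exact ⟨x, subset_gconvHull F hx, 1, by simp, isComb_one _ _⟩
  · rintro w ⟨y, hy, t, ht, hw⟩
    exact hX.gconvex_iff.1 (gconvex_gconvHull _) a (subset_gconvHull _ (mem_insert a F)) y
      (gconvHull_mono (subset_insert a F) hy) t ht w hw

lemma FlatCAT0.gconvex_singleton (hX : FlatCAT0 X) (a : X) : GConvex ({a} : Set X) := by
  rw [hX.gconvex_iff]
  rintro x rfl y rfl t - w hw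
  have h := hw y
  simp only [dist_self] at h
  have h2 : dist w y ^ 2 = 0 := by rw [h]; ring
  exact dist_eq_zero.1 (pow_eq_zero_iff two_ne_zero |>.1 h2)

lemma FlatCAT0.isCompact_gconvHull (hX : FlatCAT0 X) {F : Set X} (hF : F.Finite) :
    IsCompact (gconvHull F) := by
  induction F, hF using Set.Finite.induction_on with
  | empty =>
    have : gconvHull (∅ : Set X) ⊆ ∅ :=
      gconvHull_subset (fun x hx => absurd hx (notMem_empty x)) Subset.rfl
    rw [subset_empty_iff.1 this]
    exact isCompact_empty
  | @insert a F _ _ ih =>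
    rcases F.eq_empty_or_nonempty with rfl | hne
    · have : gconvHull (insert a (∅ : Set X)) = {a} := by
        rw [insert_empty_eq]
        exact (gconvHull_subset (hX.gconvex_singleton a) Subset.rfl).antisymm
          (subset_gconvHull _)
      rw [this]
      exact isCompact_singleton
    · rw [hX.gconvHull_insert a hne]
      exact hX.isCompact_join a ih

lemma FlatCAT0.gconvex_nhd (hX : FlatCAT0 X) {C : Set X} (hC : GConvex C) (ε : ℝ) :
    GConvex {x | ∃ y ∈ C, dist x y < ε} := by
  rw [hX.gconvex_iff] at hC ⊢
  rintro x ⟨x', hx', hxx'⟩ y ⟨y', hy', hyy'⟩ t ht w hw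
  obtain ⟨w', hw'⟩ := hX.exists_isComb x' y' ht
  refine ⟨w', hC x' hx' y' hy' t ht w' hw', (hX.dist_comb_le ht hw hw').trans_lt ?_⟩
  exact convex_Iio ε hxx' hyy' (sub_nonneg.2 ht.2) ht.1 (by ring)

lemma FlatCAT0.totallyBounded_gconvHull (hX : FlatCAT0 X) {K : Set X} (hK : IsCompact K) :
    TotallyBounded (gconvHull K) := by
  rw [Metric.totallyBounded_iff]
  intro ε hε
  obtain ⟨F, hF, hKF⟩ := Metric.totallyBounded_iff.1 hK.totallyBounded (ε / 2) (half_pos hε)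
  obtain ⟨T, hT, hFT⟩ := Metric.totallyBounded_iff.1 (hX.isCompact_gconvHull hF).totallyBounded
    (ε / 2) (half_pos hε)
  refine ⟨T, hT, ?_⟩
  have hsub : gconvHull K ⊆ {x | ∃ y ∈ gconvHull F, dist x y < ε / 2} := by
    refine gconvHull_subset (hX.gconvex_nhd (gconvex_gconvHull F) _) fun x hx => ?_
    obtain ⟨y, hy, hxy⟩ := mem_iUnion₂.1 (hKF hx)
    exact ⟨y, subset_gconvHull F hy, hxy⟩
  intro x hx
  obtain ⟨y, hy, hxy⟩ := hsub hx
  obtain ⟨z, hz, hyz⟩ := mem_iUnion₂.1 (hFT hy)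
  refine mem_iUnion₂.2 ⟨z, hz, ?_⟩
  rw [mem_ball] at hyz ⊢
  linarith [dist_triangle x y z]

end

/-- In a flat complete CAT(0) space, the closed convex hull of a compact set is
compact; if the set is moreover finite, its convex hull itself is compact. -/
theorem flat_closure_convHull_compact {X : Type*} [MetricSpace X] [CompleteSpace X]
    (hX : FlatCAT0 X) (K : Set X) (hK : IsCompact K) :
    IsCompact (closure (gconvHull K)) ∧ (K.Finite → IsCompact (gconvHull K)) :=
  ⟨isCompact_iff_totallyBounded_isComplete.2
    ⟨(hX.totallyBounded_gconvHull hK).closure, isClosed_closure.isComplete⟩,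
    fun hF => hX.isCompact_gconvHull hF⟩
end
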